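/- arXiv:2002.06577 — 2 statements merged into one kernel-verified Lean document; each statement's English description precedes it below -/
import Mathlib

section
/- Let A ∈ ℝ^{n×n}, B ∈ ℝ^{n×m} with (A,B) stabilizable and all eigenvalues of A in the closed unit disc. Then for every ε > 0 the discrete algebraic Riccati equation AᵀP A − P − AᵀP B (I + BᵀP B)^{−1} BᵀP A + εI = 0 has a unique positive definite solution P_ε. -/
open Matrix Filter Topology Kronecker
open scoped Classical

noncomputable section

/-- A complex square matrix is Schur stable if all its eigenvalues lie in the open unit disc. -/
def SchurStableC {ι : Type*} [Fintype ι] [DecidableEq ι] (M : Matrix ι ι ℂ) : Prop :=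
  ∀ μ ∈ spectrum ℂ M, ‖μ‖ < 1

/-- A real square matrix is Schur stable if all its (complex) eigenvalues lie in the open
unit disc. -/
def SchurStable {ι : Type*} [Fintype ι] [DecidableEq ι] (M : Matrix ι ι ℝ) : Prop :=
  SchurStableC (M.map Complex.ofReal)

/-- All eigenvalues of a real square matrix lie in the closed unit disc. -/
def EigInClosedUnitDisc {ι : Type*} [Fintype ι] [DecidableEq ι] (M : Matrix ι ι ℝ) : Prop :=
  ∀ μ ∈ spectrum ℂ (M.map Complex.ofReal), ‖μ‖ ≤ 1

/-- The pair (A,B) is stabilizable. -/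
def Stabilizable {n m : ℕ} (A : Matrix (Fin n) (Fin n) ℝ) (B : Matrix (Fin n) (Fin m) ℝ) : Prop :=
  ∃ K : Matrix (Fin m) (Fin n) ℝ, SchurStable (A - B * K)

/-- The pair (C,A) is detectable. -/
def Detectable {n q : ℕ} (C : Matrix (Fin q) (Fin n) ℝ) (A : Matrix (Fin n) (Fin n) ℝ) : Prop :=
  ∃ F : Matrix (Fin n) (Fin q) ℝ, SchurStable (A - F * C)

/-- `P` is a positive definite solution of the discrete algebraic Riccati equation
`AᵀPA − P − AᵀPB(I + BᵀPB)⁻¹BᵀPA + εI = 0`. -/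
def IsDARESol {n m : ℕ} (A : Matrix (Fin n) (Fin n) ℝ) (B : Matrix (Fin n) (Fin m) ℝ)
    (ε : ℝ) (P : Matrix (Fin n) (Fin n) ℝ) : Prop :=
  P.PosDef ∧
    Aᵀ * P * A - P - Aᵀ * P * B * (1 + Bᵀ * P * B)⁻¹ * (Bᵀ * P * A)
      + ε • (1 : Matrix (Fin n) (Fin n) ℝ) = 0

/-- The low-gain feedback `K = (I + BᵀPB)⁻¹BᵀPA`. -/
def gainK {n m : ℕ} (A : Matrix (Fin n) (Fin n) ℝ) (B : Matrix (Fin n) (Fin m) ℝ)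
    (P : Matrix (Fin n) (Fin n) ℝ) : Matrix (Fin m) (Fin n) ℝ :=
  (1 + Bᵀ * P * B)⁻¹ * (Bᵀ * P * A)

/-- `ω_max`: zero if `A` is Schur stable, otherwise the largest `ω ∈ [0,π]` with
`det(e^{iω}I − A) = 0`. -/
def omegaMax {n : ℕ} (A : Matrix (Fin n) (Fin n) ℝ) : ℝ :=
  if SchurStable A then 0
  else sSup {ω : ℝ | ω ∈ Set.Icc 0 Real.pi ∧
    (Complex.exp (ω * Complex.I) • (1 : Matrix (Fin n) (Fin n) ℂ)
      - A.map Complex.ofReal).det = 0}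

/-- In-degree `d_in(i) = Σ_j a_{ij}`. -/
def dIn {N : ℕ} (a : Fin N → Fin N → ℝ) (i : Fin N) : ℝ := ∑ j, a i j

/-- The Laplacian matrix of the weights `a`. -/
def lapL {N : ℕ} (a : Fin N → Fin N → ℝ) : Matrix (Fin N) (Fin N) ℝ :=
  Matrix.of fun i j => if i = j then dIn a i else -a i j

/-- The expanded Laplacian `L̄ = L + diag(ι)`. -/
def lapLbar {N : ℕ} (a : Fin N → Fin N → ℝ) (ι : Fin N → ℝ) : Matrix (Fin N) (Fin N) ℝ :=
  lapL a + Matrix.diagonal ι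

/-- `D̄ = I − (2I + D_in)⁻¹ L̄`. -/
def DbarM {N : ℕ} (a : Fin N → Fin N → ℝ) (ι : Fin N → ℝ) : Matrix (Fin N) (Fin N) ℝ :=
  1 - ((2 : ℝ) • (1 : Matrix (Fin N) (Fin N) ℝ) + Matrix.diagonal (dIn a))⁻¹ * lapLbar a ι

/-
Completing the square shows that the Riccati operator is the minimum over `K` of the monotone maps
`P ↦ (A - BK)ᴴ P (A - BK) + Kᴴ R K + Q`, so it is itself monotone on positive semidefinite matrices
for the Loewner order. A stabilizing `K` yields a Lyapunov supersolution `Y`; iterating the Riccati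
operator from `0` therefore gives an increasing sequence bounded by `Y`, whose limit is a fixed
point. For uniqueness, the optimal feedback at a supersolution `P` makes `F = A - BK` a strict
contraction for the form `P`, and the difference `D = P' - P` with a subsolution satisfies
`D ≤ Fᴴ D F`, hence `D ≤ 0`.
-/

lemma isTopologicallyNilpotent_of_spectralRadius_lt_one {𝔸 : Type*} [NormedRing 𝔸]
    [NormedAlgebra ℂ 𝔸] [CompleteSpace 𝔸] {a : 𝔸} (ha : spectralRadius ℂ a < 1) :
    IsTopologicallyNilpotent a := by
  obtain ⟨r, har, hr1⟩ := ENNReal.lt_iff_exists_nnreal_btwn.1 ha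
  have hpow : ∀ᶠ k : ℕ in atTop, ‖a ^ k‖ ≤ (r : ℝ) ^ k := by
    filter_upwards [(spectrum.gelfand_formula a).eventually_lt_const har,
      eventually_gt_atTop 0] with k hk hk0
    rw [one_div, ENNReal.rpow_inv_lt_iff (by positivity), ENNReal.rpow_natCast] at hk
    exact_mod_cast hk.le
  exact squeeze_zero_norm' hpow
    (tendsto_pow_atTop_nhds_zero_of_lt_one r.coe_nonneg (by exact_mod_cast hr1))

section SchurStable

variable {ι : Type*} [Fintype ι] [DecidableEq ι]

open scoped Matrix.Norms.L2Operator in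
lemma SchurStableC.isTopologicallyNilpotent {F : Matrix ι ι ℂ} (hF : SchurStableC F) :
    IsTopologicallyNilpotent F := by
  cases isEmpty_or_nonempty ι
  · exact tendsto_const_nhds.congr fun _ => Subsingleton.elim _ _
  · exact isTopologicallyNilpotent_of_spectralRadius_lt_one <|
      spectrum.spectralRadius_lt_of_forall_lt F hF

lemma SchurStable.isTopologicallyNilpotent {F : Matrix ι ι ℝ} (hF : SchurStable F) :
    IsTopologicallyNilpotent F := by
  have hre : Tendsto (fun k => (F.map Complex.ofReal ^ k).map Complex.re) atTop (𝓝 0) := by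
    simpa [Function.comp_def] using
      ((continuous_id.matrix_map Complex.continuous_re).tendsto 0).comp
        (SchurStableC.isTopologicallyNilpotent hF)
  refine hre.congr fun k => ?_
  have hpow : F.map Complex.ofReal ^ k = (F ^ k).map Complex.ofReal :=
    (map_pow Complex.ofRealHom.mapMatrix F k).symm
  ext i j
  simp [hpow]

end SchurStable

section LoewnerOrder

open scoped ComplexOrder MatrixOrder

variable {𝕜 ι : Type*} [RCLike 𝕜]

lemma isClosed_setOf_posSemidef : IsClosed {X : Matrix ι ι 𝕜 | X.PosSemidef} := by
  simp only [Matrix.PosSemidef, IsHermitian, Set.ofPred_and, Set.ofPred_forall, Finsupp.sum]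
  refine (isClosed_eq (by fun_prop) (by fun_prop)).inter (isClosed_iInter fun x => ?_)
  exact isClosed_le continuous_const (by fun_prop)

instance matrixOrderClosedTopology : OrderClosedTopology (Matrix ι ι 𝕜) where
  isClosed_le' := isClosed_setOf_posSemidef.preimage (continuous_snd.sub continuous_fst)

lemma conjTranspose_mul_mul_mono {κ : Type*} [Fintype ι] [Finite κ] (F : Matrix ι κ 𝕜) :
    Monotone fun X : Matrix ι ι 𝕜 => Fᴴ * X * F := fun X Y h => by
  simpa only [Matrix.le_iff, Matrix.mul_sub, Matrix.sub_mul] using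
    (Matrix.le_iff.1 h).conjTranspose_mul_mul_same F

lemma posDef_add_conjTranspose_mul_mul {κ : Type*} [Fintype ι] [Finite κ] {R : Matrix κ κ 𝕜}
    {P : Matrix ι ι 𝕜} (hR : R.PosDef) (B : Matrix ι κ 𝕜) (hP : P.PosSemidef) :
    (R + Bᴴ * P * B).PosDef :=
  hR.add_posSemidef (hP.conjTranspose_mul_mul_same B)

lemma re_trace_mono [Fintype ι] :
    Monotone fun X : Matrix ι ι 𝕜 => RCLike.re X.trace := fun _ _ h =>
  RCLike.re_monotone <| (Matrix.tracePositiveLinearMap ι ℝ 𝕜).monotone' h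

lemma norm_apply_le_re_trace [Fintype ι] {X : Matrix ι ι 𝕜} (hX : X.PosSemidef) (i j : ι) :
    ‖X i j‖ ≤ RCLike.re X.trace := by
  obtain ⟨Y, rfl⟩ := CStarAlgebra.nonneg_iff_eq_star_mul_self.mp hX.nonneg
  have hrow (k : ι) : ‖Y k i‖ * ‖Y k j‖ ≤ ∑ l, ‖Y k l‖ ^ 2 := by
    have hsq (l : ι) : ‖Y k l‖ ^ 2 ≤ ∑ l, ‖Y k l‖ ^ 2 :=
      Finset.single_le_sum (f := fun l => ‖Y k l‖ ^ 2) (fun _ _ => sq_nonneg _)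
        (Finset.mem_univ l)
    linarith [two_mul_le_add_sq ‖Y k i‖ ‖Y k j‖, hsq i, hsq j]
  calc ‖(star Y * Y) i j‖ ≤ ∑ k, ∑ l, ‖Y k l‖ ^ 2 :=
        norm_sum_le_of_le _ fun k _ => by simpa [star_apply] using hrow k
    _ = RCLike.re (star Y * Y).trace := by
        rw [Finset.sum_comm]
        simp [trace, mul_apply, star_apply, ← RCLike.normSq_eq_def', RCLike.normSq_apply]

lemma exists_tendsto_of_monotone_of_bddAbove [Finite ι] {S : ℕ → Matrix ι ι 𝕜}
    (hS : Monotone S) (hbdd : BddAbove (Set.range S)) : ∃ L, Tendsto S atTop (𝓝 L) := by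
  cases nonempty_fintype ι
  have htrace : BddAbove (Set.range fun k => RCLike.re (S k).trace) := by
    simpa only [← Set.range_comp, Function.comp_def] using re_trace_mono.map_bddAbove hbdd
  obtain ⟨T, hT⟩ : ∃ T, Tendsto (fun k => RCLike.re (S k).trace) atTop (𝓝 T) :=
    ⟨_, tendsto_atTop_ciSup (re_trace_mono.comp hS) htrace⟩
  have hcauchy (i j : ι) : CauchySeq fun k => S k i j := by
    refine cauchySeq_of_le_tendsto_0' (fun k => T - RCLike.re (S k).trace)
      (fun k l hkl => ?_) (by simpa using hT.const_sub T)
    calc dist (S k i j) (S l i j) = ‖(S l - S k) i j‖ := by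
          rw [dist_comm, dist_eq_norm, Matrix.sub_apply]
      _ ≤ RCLike.re (S l - S k).trace := norm_apply_le_re_trace (Matrix.le_iff.1 (hS hkl)) i j
      _ = RCLike.re (S l).trace - RCLike.re (S k).trace := by rw [trace_sub, map_sub]
      _ ≤ T - RCLike.re (S k).trace :=
          sub_le_sub_right ((re_trace_mono.comp hS).ge_of_tendsto hT l) _
  choose L hL using fun i j => cauchySeq_tendsto_of_complete (hcauchy i j)
  exact ⟨.of L, tendsto_pi_nhds.2 fun i => tendsto_pi_nhds.2 fun j => hL i j⟩

lemma exists_isFixedPt_of_monotoneOn_Icc [Finite ι] {f : Matrix ι ι 𝕜 → Matrix ι ι 𝕜}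
    {X Y : Matrix ι ι 𝕜} (hXY : X ≤ Y) (hmaps : Set.MapsTo f (Set.Icc X Y) (Set.Icc X Y))
    (hmono : MonotoneOn f (Set.Icc X Y)) (hcont : ContinuousOn f (Set.Icc X Y)) :
    ∃ P ∈ Set.Icc X Y, Function.IsFixedPt f P := by
  have hmem (k : ℕ) : f^[k] X ∈ Set.Icc X Y := hmaps.iterate k ⟨le_rfl, hXY⟩
  have hstep : Monotone fun k => f^[k] X := by
    refine monotone_nat_of_le_succ fun k => ?_
    induction k with
    | zero => exact (hmem 1).1
    | succ k ih =>
      simpa only [Function.iterate_succ_apply'] using hmono (hmem k) (hmem (k + 1)) ih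
  obtain ⟨P, hP⟩ := exists_tendsto_of_monotone_of_bddAbove hstep
    ⟨Y, Set.forall_mem_range.2 fun k => (hmem k).2⟩
  have hPmem : P ∈ Set.Icc X Y := isClosed_Icc.mem_of_tendsto hP (.of_forall hmem)
  have hfP : Tendsto (fun k => f (f^[k] X)) atTop (𝓝 (f P)) :=
    (hcont P hPmem).tendsto.comp (tendsto_nhdsWithin_iff.2 ⟨hP, .of_forall hmem⟩)
  refine ⟨P, hPmem, tendsto_nhds_unique hfP ?_⟩
  simpa only [Function.comp_def, Function.iterate_succ_apply'] using
    hP.comp (tendsto_add_atTop_nat 1)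

lemma le_re_trace_smul_one [Fintype ι] [DecidableEq ι] {X : Matrix ι ι 𝕜} (hX : X.PosSemidef) :
    X ≤ RCLike.re X.trace • 1 := by
  rw [← Algebra.algebraMap_eq_smul_one]
  refine le_algebraMap_of_spectrum_le fun x hx => ?_
  rw [hX.isHermitian.spectrum_real_eq_range_eigenvalues] at hx
  obtain ⟨i, rfl⟩ := hx
  simpa [hX.isHermitian.trace_eq_sum_eigenvalues] using
    Finset.single_le_sum (fun j _ => hX.eigenvalues_nonneg j) (Finset.mem_univ i)

lemma exists_pos_smul_one_le [Finite ι] [DecidableEq ι] {Q : Matrix ι ι 𝕜} (hQ : Q.PosDef) :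
    ∃ c : ℝ, 0 < c ∧ c • 1 ≤ Q := by
  cases nonempty_fintype ι
  cases isEmpty_or_nonempty ι
  · exact ⟨1, one_pos, (Subsingleton.elim _ _).le⟩
  · simpa only [Algebra.algebraMap_eq_smul_one] using
      (CFC.exists_pos_algebraMap_le_iff hQ.isHermitian).2 fun x hx =>
        hQ.isStrictlyPositive.spectrum_pos hx

lemma exists_forall_le_re_trace_smul [Fintype ι] {Q : Matrix ι ι 𝕜} (hQ : Q.PosDef) :
    ∃ c : ℝ, 0 ≤ c ∧ ∀ X : Matrix ι ι 𝕜, X.PosSemidef → X ≤ (c * RCLike.re X.trace) • Q := by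
  obtain ⟨c, hc, hcQ⟩ := exists_pos_smul_one_le hQ
  refine ⟨c⁻¹, inv_nonneg.2 hc.le, fun X hX => (le_re_trace_smul_one hX).trans ?_⟩
  have htr : 0 ≤ c⁻¹ * RCLike.re X.trace :=
    mul_nonneg (inv_nonneg.2 hc.le) (RCLike.nonneg_iff.1 hX.trace_nonneg).1
  convert smul_le_smul_of_nonneg_left hcQ htr using 1
  rw [smul_smul]
  field_simp

lemma exists_nonneg_le_smul [Finite ι] {X Q : Matrix ι ι 𝕜} (hX : X.PosSemidef) (hQ : Q.PosDef) :
    ∃ t : ℝ, 0 ≤ t ∧ X ≤ t • Q := by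
  cases nonempty_fintype ι
  obtain ⟨c, hc, hcX⟩ := exists_forall_le_re_trace_smul hQ
  exact ⟨_, mul_nonneg hc (RCLike.nonneg_iff.1 hX.trace_nonneg).1, hcX X hX⟩

lemma eventually_nhdsGE_zero_le [Finite ι] {Q : Matrix ι ι 𝕜} (hQ : Q.PosDef) :
    ∀ᶠ X in 𝓝[≥] 0, X ≤ Q := by
  cases nonempty_fintype ι
  obtain ⟨c, -, hc⟩ := exists_forall_le_re_trace_smul hQ
  have htrace : Tendsto (fun X : Matrix ι ι 𝕜 => c * RCLike.re X.trace) (𝓝 0) (𝓝 0) := by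
    have hcont : Continuous fun X : Matrix ι ι 𝕜 => c * RCLike.re X.trace := by fun_prop
    simpa using hcont.tendsto 0
  filter_upwards [self_mem_nhdsWithin,
    nhdsWithin_le_nhds (htrace.eventually_le_const zero_lt_one)] with X hX hX1
  calc X ≤ (c * RCLike.re X.trace) • Q := hc X (Matrix.nonneg_iff_posSemidef.1 hX)
    _ ≤ (1 : ℝ) • Q := smul_le_smul_of_nonneg_right hX1 hQ.posSemidef.nonneg
    _ = Q := one_smul ℝ Q

end LoewnerOrder

section Lyapunov

open scoped ComplexOrder MatrixOrder

variable {𝕜 ι : Type*} [RCLike 𝕜] [Fintype ι]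

lemma exists_posSemidef_lyapunov_le [DecidableEq ι] {F W : Matrix ι ι 𝕜}
    (hF : IsTopologicallyNilpotent F) (hW : W.PosDef) :
    ∃ Y : Matrix ι ι 𝕜, Y.PosSemidef ∧ Fᴴ * Y * F + W ≤ Y := by
  -- Starting from `W + W`, a finite sum suffices: `V N ≤ W` absorbs its remainder.
  set V : ℕ → Matrix ι ι 𝕜 := fun k => (F ^ k)ᴴ * (W + W) * F ^ k
  have hV (k : ℕ) : (V k).PosSemidef :=
    (hW.add hW).posSemidef.conjTranspose_mul_mul_same _
  have hV_succ (k : ℕ) : Fᴴ * V k * F = V (k + 1) := by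
    simp only [V, pow_succ, conjTranspose_mul, Matrix.mul_assoc]
  have hV_zero : V 0 = W + W := by simp [V]
  have hV_lim : Tendsto V atTop (𝓝[≥] 0) := by
    refine tendsto_nhdsWithin_iff.2 ⟨?_, .of_forall fun k => (hV k).nonneg⟩
    have hcont : Continuous fun X : Matrix ι ι 𝕜 => Xᴴ * (W + W) * X := by fun_prop
    simpa [V, Function.comp_def] using (hcont.tendsto 0).comp hF
  obtain ⟨N, hN⟩ := (hV_lim.eventually (eventually_nhdsGE_zero_le hW)).exists
  set S := ∑ k ∈ Finset.range N, V k
  have htelescope : Fᴴ * S * F + (W + W) = S + V N := by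
    rw [← Finset.sum_range_succ, Finset.sum_range_succ', hV_zero, Finset.mul_sum,
      Finset.sum_mul]
    simp only [hV_succ]
  refine ⟨S, posSemidef_sum _ fun k _ => hV k, le_of_add_le_add_right (a := W) ?_⟩
  calc Fᴴ * S * F + W + W = S + V N := by rw [add_assoc, htelescope]
    _ ≤ S + W := by gcongr

lemma exists_lt_one_lyapunov_le_smul {F P Q : Matrix ι ι 𝕜} (hP : P.PosSemidef) (hQ : Q.PosDef)
    (h : Fᴴ * P * F + Q ≤ P) : ∃ r : ℝ, 0 ≤ r ∧ r < 1 ∧ Fᴴ * P * F ≤ r • P := by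
  obtain ⟨s, hs, hPs⟩ := exists_nonneg_le_smul hP hQ
  have hs1 : 0 < s + 1 := by positivity
  refine ⟨s / (s + 1), by positivity, (div_lt_one hs1).2 (lt_add_one s), ?_⟩
  have hPQ : (s + 1)⁻¹ • P ≤ Q := by
    rw [inv_smul_le_iff_of_pos hs1]
    exact hPs.trans (smul_le_smul_of_nonneg_right (lt_add_one s).le hQ.posSemidef.nonneg)
  calc Fᴴ * P * F ≤ P - Q := le_sub_iff_add_le.2 h
    _ ≤ P - (s + 1)⁻¹ • P := sub_le_sub_left hPQ P
    _ = (s / (s + 1)) • P := by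
        rw [sub_eq_iff_eq_add, ← add_smul, div_eq_mul_inv, ← add_one_mul,
          mul_inv_cancel₀ hs1.ne', one_smul]

lemma nonpos_of_le_conjTranspose_mul_mul {F P D : Matrix ι ι 𝕜} {r t : ℝ}
    (hr0 : 0 ≤ r) (hr1 : r < 1) (ht : 0 ≤ t) (hP : Fᴴ * P * F ≤ r • P)
    (hD : D ≤ Fᴴ * D * F) (hDP : D ≤ t • P) : D ≤ 0 := by
  have hpow (k : ℕ) : D ≤ (t * r ^ k) • P := by
    induction k with
    | zero => simpa using hDP
    | succ k ih =>
      calc D ≤ Fᴴ * D * F := hD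
        _ ≤ Fᴴ * ((t * r ^ k) • P) * F := conjTranspose_mul_mul_mono F ih
        _ = (t * r ^ k) • (Fᴴ * P * F) := by rw [Matrix.mul_smul, Matrix.smul_mul]
        _ ≤ (t * r ^ k) • (r • P) := smul_le_smul_of_nonneg_left hP (by positivity)
        _ = (t * r ^ (k + 1)) • P := by rw [smul_smul, pow_succ, mul_assoc]
  have hlim : Tendsto (fun k : ℕ => (t * r ^ k) • P) atTop (𝓝 0) := by
    simpa using ((tendsto_pow_atTop_nhds_zero_of_lt_one hr0 hr1).const_mul t).smul_const P
  exact ge_of_tendsto' hlim hpow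

end Lyapunov

section Riccati

open scoped ComplexOrder MatrixOrder

variable {𝕜 ι κ : Type*} [RCLike 𝕜] [Fintype ι] [Fintype κ]

/-- One step of dynamic programming under the fixed state feedback `u = -K x`: the quadratic form
of the stage cost `xᴴ Q x + uᴴ R u` plus the terminal cost `P` at the next state `A x + B u`. -/
def feedbackCost (A : Matrix ι ι 𝕜) (B : Matrix ι κ 𝕜) (Q : Matrix ι ι 𝕜) (R : Matrix κ κ 𝕜)
    (K : Matrix κ ι 𝕜) (P : Matrix ι ι 𝕜) : Matrix ι ι 𝕜 :=
  (A - B * K)ᴴ * P * (A - B * K) + Kᴴ * R * K + Q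

lemma feedbackCost_mono (A : Matrix ι ι 𝕜) (B : Matrix ι κ 𝕜) (Q : Matrix ι ι 𝕜)
    (R : Matrix κ κ 𝕜) (K : Matrix κ ι 𝕜) : Monotone (feedbackCost A B Q R K) := fun _ _ h =>
  add_le_add_left (add_le_add_left (conjTranspose_mul_mul_mono (A - B * K) h) _) _

variable [DecidableEq κ]

/-- The minimizing feedback `K` of `feedbackCost A B Q R K P`; it does not depend on `Q`. -/
def riccatiGain (A : Matrix ι ι 𝕜) (B : Matrix ι κ 𝕜) (R : Matrix κ κ 𝕜) (P : Matrix ι ι 𝕜) :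
    Matrix κ ι 𝕜 :=
  (R + Bᴴ * P * B)⁻¹ * (Bᴴ * P * A)

/-- The Riccati operator with state weight `Q` and input weight `R`, whose fixed points are the
solutions of the discrete algebraic Riccati equation. -/
def riccatiMap (A : Matrix ι ι 𝕜) (B : Matrix ι κ 𝕜) (Q : Matrix ι ι 𝕜) (R : Matrix κ κ 𝕜)
    (P : Matrix ι ι 𝕜) : Matrix ι ι 𝕜 :=
  Aᴴ * P * A - Aᴴ * P * B * (R + Bᴴ * P * B)⁻¹ * (Bᴴ * P * A) + Q

variable {A : Matrix ι ι 𝕜} {B : Matrix ι κ 𝕜} {Q : Matrix ι ι 𝕜} {R : Matrix κ κ 𝕜}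
  {P P' : Matrix ι ι 𝕜}

lemma feedbackCost_eq_riccatiMap_add (hR : R.IsHermitian) (hP : P.IsHermitian)
    (hM : IsUnit (R + Bᴴ * P * B).det) (K : Matrix κ ι 𝕜) :
    feedbackCost A B Q R K P = riccatiMap A B Q R P +
      (K - riccatiGain A B R P)ᴴ * (R + Bᴴ * P * B) * (K - riccatiGain A B R P) := by
  set M := R + Bᴴ * P * B with hM_def
  set L := Bᴴ * P * A with hL_def
  have hL : Lᴴ = Aᴴ * P * B := by simp [hL_def, hP.eq, Matrix.mul_assoc]
  have hM_herm : Mᴴ = M := (hR.add (isHermitian_conjTranspose_mul_mul B hP)).eq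
  have hsquare : (K - M⁻¹ * L)ᴴ * M * (K - M⁻¹ * L) =
      Kᴴ * M * K - Kᴴ * L - Lᴴ * K + Lᴴ * M⁻¹ * L := by
    have hleft : (K - M⁻¹ * L)ᴴ * M = Kᴴ * M - Lᴴ := by
      rw [conjTranspose_sub, conjTranspose_mul, conjTranspose_nonsing_inv, hM_herm,
        Matrix.sub_mul, nonsing_inv_mul_cancel_right _ _ hM]
    rw [hleft, Matrix.mul_sub, Matrix.sub_mul, Matrix.sub_mul, Matrix.mul_assoc Kᴴ M (M⁻¹ * L),
      mul_nonsing_inv_cancel_left _ _ hM, Matrix.mul_assoc Lᴴ]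
    abel
  rw [feedbackCost, riccatiMap, riccatiGain, ← hM_def, ← hL_def, hsquare, hL, hM_def, hL_def]
  simp only [conjTranspose_sub, conjTranspose_mul, Matrix.sub_mul, Matrix.mul_sub,
    Matrix.mul_add, Matrix.add_mul, Matrix.mul_assoc]
  abel

lemma riccatiMap_eq_feedbackCost (hR : R.PosDef) (hP : P.PosSemidef) :
    riccatiMap A B Q R P = feedbackCost A B Q R (riccatiGain A B R P) P := by
  have hM := (isUnit_iff_isUnit_det _).1 (posDef_add_conjTranspose_mul_mul hR B hP).isUnit
  simp [feedbackCost_eq_riccatiMap_add hR.isHermitian hP.isHermitian hM]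

lemma riccatiMap_le_feedbackCost (hR : R.PosDef) (hP : P.PosSemidef) (K : Matrix κ ι 𝕜) :
    riccatiMap A B Q R P ≤ feedbackCost A B Q R K P := by
  have hM := posDef_add_conjTranspose_mul_mul hR B hP
  rw [feedbackCost_eq_riccatiMap_add hR.isHermitian hP.isHermitian
    ((isUnit_iff_isUnit_det _).1 hM.isUnit) K]
  exact le_add_of_nonneg_right (hM.posSemidef.conjTranspose_mul_mul_same _).nonneg

lemma riccatiMap_mono (hR : R.PosDef) (hP : P.PosSemidef) (h : P ≤ P') :
    riccatiMap A B Q R P ≤ riccatiMap A B Q R P' := by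
  have hP' : P'.PosSemidef := Matrix.nonneg_iff_posSemidef.1 (hP.nonneg.trans h)
  rw [riccatiMap_eq_feedbackCost hR hP']
  exact (riccatiMap_le_feedbackCost hR hP _).trans (feedbackCost_mono A B Q R _ h)

lemma posDef_riccatiMap (hQ : Q.PosDef) (hR : R.PosDef) (hP : P.PosSemidef) :
    (riccatiMap A B Q R P).PosDef := by
  rw [riccatiMap_eq_feedbackCost hR hP]
  exact PosDef.posSemidef_add ((hP.conjTranspose_mul_mul_same _).add
    (hR.posSemidef.conjTranspose_mul_mul_same _)) hQ

lemma continuousAt_riccatiMap (hR : R.PosDef) (hP : P.PosSemidef) :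
    ContinuousAt (riccatiMap A B Q R) P := by
  have hdet : (R + Bᴴ * P * B).det ≠ 0 := (posDef_add_conjTranspose_mul_mul hR B hP).det_pos.ne'
  have hinv : ContinuousAt (fun X => (R + Bᴴ * X * B)⁻¹) P := by
    refine ContinuousAt.comp (f := fun X => R + Bᴴ * X * B) (continuousAt_matrix_inv _ ?_)
      (by fun_prop)
    simpa only [Ring.inverse_eq_inv'] using continuousAt_inv₀ hdet
  unfold riccatiMap
  fun_prop

lemma le_of_le_riccatiMap_of_riccatiMap_le (hQ : Q.PosDef) (hR : R.PosDef)
    (hP : P.PosSemidef) (hP' : P'.PosSemidef)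
    (hsub : P' ≤ riccatiMap A B Q R P') (hsuper : riccatiMap A B Q R P ≤ P) : P' ≤ P := by
  set K := riccatiGain A B R P
  set F := A - B * K
  have hcost : feedbackCost A B Q R K P ≤ P :=
    (riccatiMap_eq_feedbackCost hR hP).symm.le.trans hsuper
  have hlyapunov : Fᴴ * P * F + Q ≤ P :=
    (add_le_add_left (le_add_of_nonneg_right
      (hR.posSemidef.conjTranspose_mul_mul_same K).nonneg) Q).trans hcost
  have hdiff : P' - P ≤ Fᴴ * (P' - P) * F :=
    calc P' - P ≤ feedbackCost A B Q R K P' - feedbackCost A B Q R K P :=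
          sub_le_sub (hsub.trans (riccatiMap_le_feedbackCost hR hP' K)) hcost
      _ = Fᴴ * (P' - P) * F := by
          simp only [feedbackCost, F, Matrix.mul_sub, Matrix.sub_mul]
          abel
  have hPpos : P.PosDef := by
    simpa only [add_sub_cancel] using
      (posDef_riccatiMap (A := A) (B := B) hQ hR hP).add_posSemidef (Matrix.le_iff.1 hsuper)
  obtain ⟨r, hr0, hr1, hr⟩ := exists_lt_one_lyapunov_le_smul hP hQ hlyapunov
  obtain ⟨t, ht, hP't⟩ := exists_nonneg_le_smul hP' hPpos
  exact sub_nonpos.1 <| nonpos_of_le_conjTranspose_mul_mul hr0 hr1 ht hr hdiff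
    ((sub_le_self P' hP.nonneg).trans hP't)

variable [DecidableEq ι]

lemma exists_posSemidef_riccatiMap_eq (hQ : Q.PosDef) (hR : R.PosDef)
    (hAB : ∃ K : Matrix κ ι 𝕜, IsTopologicallyNilpotent (A - B * K)) :
    ∃ P : Matrix ι ι 𝕜, P.PosSemidef ∧ riccatiMap A B Q R P = P := by
  obtain ⟨K, hK⟩ := hAB
  have hW : (Kᴴ * R * K + Q).PosDef :=
    PosDef.posSemidef_add (hR.posSemidef.conjTranspose_mul_mul_same K) hQ
  obtain ⟨Y, hY, hYK⟩ := exists_posSemidef_lyapunov_le hK hW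
  have hYmap : riccatiMap A B Q R Y ≤ Y := by
    refine (riccatiMap_le_feedbackCost hR hY K).trans ?_
    rwa [feedbackCost, add_assoc]
  have hpsd {P : Matrix ι ι 𝕜} (hP : P ∈ Set.Icc 0 Y) : P.PosSemidef :=
    Matrix.nonneg_iff_posSemidef.1 hP.1
  obtain ⟨P, hP, hfix⟩ := exists_isFixedPt_of_monotoneOn_Icc hY.nonneg
    (f := riccatiMap A B Q R)
    (fun P hP => ⟨(posDef_riccatiMap hQ hR (hpsd hP)).posSemidef.nonneg,
      (riccatiMap_mono hR (hpsd hP) hP.2).trans hYmap⟩)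
    (fun P hP _ _ h => riccatiMap_mono hR (hpsd hP) h)
    (fun P hP => (continuousAt_riccatiMap hR (hpsd hP)).continuousWithinAt)
  exact ⟨P, hpsd hP, hfix⟩

theorem dare_unique_posdef_solution_general (hQ : Q.PosDef) (hR : R.PosDef)
    (hAB : ∃ K : Matrix κ ι 𝕜, IsTopologicallyNilpotent (A - B * K)) :
    ∃! P : Matrix ι ι 𝕜, P.PosDef ∧ riccatiMap A B Q R P = P := by
  obtain ⟨P, hP, hfix⟩ := exists_posSemidef_riccatiMap_eq hQ hR hAB
  refine ⟨P, ⟨hfix ▸ posDef_riccatiMap hQ hR hP, hfix⟩, fun P' ⟨hP', hfix'⟩ => le_antisymm ?_ ?_⟩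
  · exact le_of_le_riccatiMap_of_riccatiMap_le hQ hR hP hP'.posSemidef hfix'.ge hfix.le
  · exact le_of_le_riccatiMap_of_riccatiMap_le hQ hR hP'.posSemidef hP hfix.ge hfix'.le

end Riccati

lemma isDARESol_iff {n m : ℕ} {A : Matrix (Fin n) (Fin n) ℝ} {B : Matrix (Fin n) (Fin m) ℝ}
    {ε : ℝ} {P : Matrix (Fin n) (Fin n) ℝ} :
    IsDARESol A B ε P ↔ P.PosDef ∧ riccatiMap A B (ε • 1) 1 P = P := by
  simp only [IsDARESol, riccatiMap, conjTranspose_eq_transpose_of_trivial]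
  rw [sub_right_comm, sub_add_eq_add_sub, sub_eq_zero]

/-- for every `ε > 0` the discrete algebraic Riccati equation
`AᵀPA − P − AᵀPB(I + BᵀPB)⁻¹BᵀPA + εI = 0` has a unique positive definite solution. -/
theorem dare_unique_posdef_solution {n m : ℕ}
    (A : Matrix (Fin n) (Fin n) ℝ) (B : Matrix (Fin n) (Fin m) ℝ)
    (hstab : Stabilizable A B) (hA : EigInClosedUnitDisc A)
    (ε : ℝ) (hε : 0 < ε) :
    ∃! P : Matrix (Fin n) (Fin n) ℝ, IsDARESol A B ε P := by
  simpa only [isDARESol_iff] using dare_unique_posdef_solution_general (PosDef.one.smul hε)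
    PosDef.one (hstab.imp fun _ hK => hK.isTopologicallyNilpotent)

end
end

section
/- Let A ∈ ℝ^{n×n}, B ∈ ℝ^{n×m} with (A,B) stabilizable and all eigenvalues of A in the closed unit disc, and let κ̄ ∈ ℕ satisfy κ̄·ω_max < π/2. Let ρ > 0 satisfy ρ·cos(κ̄·ω_max) > 1/2. Then there exists ε* > 0 such that for all ε ∈ (0, ε*], all ω ∈ [−π, π], and all integers κ ∈ {0, …, κ̄}: det[ e^{iω} I − A + ρ e^{−iωκ} B K_ε ] ≠ 0, where P_ε is the unique positive definite solution of the discrete algebraic Riccati equation AᵀP A − P − AᵀP B (I + BᵀP B)^{−1} BᵀP A + εI = 0 and K_ε := (I + BᵀP_ε B)^{−1} BᵀP_ε A. -/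
open Matrix Filter Topology Kronecker
open scoped Classical

noncomputable section

/-!
Write `K` for the gain of the Riccati solution `P`. Completing the square gives, for every `F`,
`(A - BF)ᴴP(A - BF) + FᴴF + ε = P + (F - K)ᴴ(1 + BᴴPB)(F - K)`.

A stabilizing `F` bounds `P` uniformly in `ε`, so `(P, K)` has cluster points as `ε → 0`; each of
them solves the equation with `ε = 0`. For such a limit the closed loop acts on the range of `P`
with eigenvalues that are inverses of eigenvalues of `Aᴴ`, hence of modulus at least one, whereas
the case `F = K` forces modulus at most one and zero gain on the unit circle. An eigenvector would
then be an uncontrollable unit-circle mode, which the Hautus test excludes. Thus `P → 0`, `K → 0`.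

Taking `F = lK` turns the identity into a Stein inequality for `A - l BK` as soon as
`‖l - 1‖²‖BᴴPB‖ ≤ 2 Re l - 1`, which holds for small `ε` if `Re l > 1/2`. This covers frequencies
near unit-circle eigenvalues of `A`; at all others the determinant at `K = 0` is nonzero, and
compactness of the frequency range makes both arguments uniform.
-/

open scoped ComplexConjugate ComplexOrder MatrixOrder Matrix.Norms.L2Operator

section Eigenvectors

lemma exists_apply_eq_smul_of_ker_le_comap {K V W : Type*} [Field K] [IsAlgClosed K]
    [AddCommGroup V] [Module K V] [FiniteDimensional K V] [AddCommGroup W] [Module K W]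
    {f : V →ₗ[K] W} {g : Module.End K V} (hf : f ≠ 0) (hg : f.ker ≤ f.ker.comap g) :
    ∃ (μ : K) (v : V), f v ≠ 0 ∧ f (g v) = μ • f v := by
  have : Nontrivial (V ⧸ f.ker) :=
    Submodule.Quotient.nontrivial_iff.mpr (mt LinearMap.ker_eq_top.mp hf)
  obtain ⟨μ, hμ⟩ := Module.End.exists_eigenvalue (f.ker.mapQ f.ker g hg)
  obtain ⟨q, hq⟩ := hμ.exists_hasEigenvector
  obtain ⟨v, rfl⟩ := f.ker.mkQ_surjective q
  refine ⟨μ, v, fun hv => hq.2 ((Submodule.Quotient.mk_eq_zero _).mpr hv), ?_⟩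
  have hgv : f.ker.mkQ (g v) = f.ker.mkQ (μ • v) := by
    simpa using! hq.apply_eq_smul
  simpa [sub_eq_zero] using (Submodule.Quotient.eq _).mp hgv

variable {ι 𝕜 : Type*} [Fintype ι] [DecidableEq ι] [Field 𝕜]

lemma mem_spectrum_iff_det_smul_one_sub_eq_zero {M : Matrix ι ι 𝕜} {μ : 𝕜} :
    μ ∈ spectrum 𝕜 M ↔ (μ • (1 : Matrix ι ι 𝕜) - M).det = 0 := by
  rw [spectrum.mem_iff, Algebra.algebraMap_eq_smul_one, Matrix.isUnit_iff_isUnit_det,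
    isUnit_iff_ne_zero, not_not]

lemma mem_spectrum_iff_exists_mulVec_eq_smul {M : Matrix ι ι 𝕜} {μ : 𝕜} :
    μ ∈ spectrum 𝕜 M ↔ ∃ v ≠ 0, M *ᵥ v = μ • v := by
  simp only [mem_spectrum_iff_det_smul_one_sub_eq_zero, ← exists_mulVec_eq_zero_iff, sub_mulVec,
    smul_mulVec, one_mulVec, sub_eq_zero, @eq_comm _ (μ • _)]

lemma star_mem_spectrum_of_conjTranspose_mulVec_eq_smul [StarRing 𝕜] {M : Matrix ι ι 𝕜} {μ : 𝕜}
    {v : ι → 𝕜} (hv : v ≠ 0) (h : Mᴴ *ᵥ v = μ • v) : star μ ∈ spectrum 𝕜 M := by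
  rw [← Set.mem_star, ← spectrum.map_star, star_eq_conjTranspose]
  exact mem_spectrum_iff_exists_mulVec_eq_smul.mpr ⟨v, hv, h⟩

end Eigenvectors

section QuadraticForms

variable {ι κ 𝕜 : Type*} [Fintype ι]

lemma star_dotProduct_conjTranspose_mul_mul_mulVec [Fintype κ] [NonUnitalSemiring 𝕜] [StarRing 𝕜]
    (P : Matrix ι ι 𝕜) (G : Matrix ι κ 𝕜) (v : κ → 𝕜) :
    star v ⬝ᵥ (Gᴴ * P * G) *ᵥ v = star (G *ᵥ v) ⬝ᵥ P *ᵥ (G *ᵥ v) := by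
  simp only [star_mulVec, dotProduct_mulVec, vecMul_vecMul, Matrix.mul_assoc]

lemma re_star_smul_dotProduct_mulVec_smul (P : Matrix ι ι ℂ) (μ : ℂ) (v : ι → ℂ) :
    (star (μ • v) ⬝ᵥ P *ᵥ (μ • v)).re = ‖μ‖ ^ 2 * (star v ⬝ᵥ P *ᵥ v).re := by
  rw [star_smul, smul_dotProduct, mulVec_smul, dotProduct_smul, smul_smul, smul_eq_mul,
    Complex.star_def, Complex.conj_mul']
  norm_cast
  rw [Complex.re_ofReal_mul]

lemma conjTranspose_smul_mul_mul_smul (c : ℂ) (K : Matrix ι κ ℂ) (T : Matrix ι ι ℂ) :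
    (c • K)ᴴ * T * (c • K) = ‖c‖ ^ 2 • (Kᴴ * T * K) := by
  rw [conjTranspose_smul, Matrix.smul_mul, Matrix.smul_mul, Matrix.mul_smul, smul_smul,
    Complex.star_def, Complex.conj_mul', ← Complex.ofReal_pow, Complex.coe_smul]

lemma star_dotProduct_mulVec_congr [NonUnitalSemiring 𝕜] [StarRing 𝕜] {P : Matrix ι ι 𝕜}
    (hP : P.IsHermitian) {v w : ι → 𝕜} (h : P *ᵥ v = P *ᵥ w) :
    star v ⬝ᵥ P *ᵥ v = star w ⬝ᵥ P *ᵥ w := by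
  rw [h, dotProduct_mulVec, ← hP.eq, ← star_mulVec, h, star_mulVec, ← dotProduct_mulVec]

end QuadraticForms

section SpectralRadius

lemma tendsto_pow_atTop_nhds_zero_of_spectralRadius_lt_one {E : Type*} [NormedRing E]
    [NormedAlgebra ℂ E] [CompleteSpace E] {a : E} (ha : spectralRadius ℂ a < 1) :
    Tendsto (fun k : ℕ => a ^ k) atTop (𝓝 0) := by
  obtain ⟨r, har, hr⟩ := ENNReal.lt_iff_exists_nnreal_btwn.mp ha
  have hr : r < 1 := by exact_mod_cast hr
  refine squeeze_zero_norm' ?_ (tendsto_pow_atTop_nhds_zero_of_lt_one r.2 hr)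
  have hgelfand := spectrum.pow_nnnorm_pow_one_div_tendsto_nhds_spectralRadius a
  filter_upwards [hgelfand.eventually_lt_const har, eventually_gt_atTop 0] with k hk hk0
  have : (‖a ^ k‖₊ : ENNReal) ≤ (r : ENNReal) ^ k := by
    rw [← ENNReal.rpow_natCast, ← ENNReal.rpow_inv_le_iff (by positivity), ← one_div]
    exact hk.le
  exact_mod_cast this

variable {E : Type*} [PartialOrder E]

lemma le_conjugate_pow_add_sum [Ring E] [StarRing E] [StarOrderedRing E] {g p q : E}
    (h : p ≤ star g * p * g + q) (N : ℕ) :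
    p ≤ star (g ^ N) * p * g ^ N + ∑ k ∈ Finset.range N, star (g ^ k) * q * g ^ k := by
  induction N with
  | zero => simp
  | succ N ih =>
    refine ih.trans ?_
    rw [Finset.sum_range_succ, add_comm (∑ k ∈ _, _), ← add_assoc]
    gcongr
    convert star_left_conjugate_le_conjugate h (g ^ N) using 1
    simp only [pow_succ', star_mul, mul_add, add_mul, mul_assoc]

lemma exists_norm_le_of_le_conjugate_add [CStarAlgebra E] [StarOrderedRing E] {g : E}
    (hg : spectralRadius ℂ g < 1) (q : E) :
    ∃ C, ∀ p, 0 ≤ p → p ≤ star g * p * g + q → ‖p‖ ≤ C := by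
  obtain ⟨N, hN⟩ : ∃ N : ℕ, ‖g ^ N‖ * ‖g ^ N‖ < 1 / 2 := by
    have hpow := (tendsto_pow_atTop_nhds_zero_of_spectralRadius_lt_one hg).norm
    have hsq := hpow.mul hpow
    rw [norm_zero, zero_mul] at hsq
    exact (hsq.eventually_lt_const one_half_pos).exists
  set s := ∑ k ∈ Finset.range N, star (g ^ k) * q * g ^ k
  refine ⟨2 * ‖s‖, fun p hp h => ?_⟩
  have : ‖p‖ ≤ 1 / 2 * ‖p‖ + ‖s‖ := calc
    ‖p‖ ≤ ‖star (g ^ N) * p * g ^ N + s‖ :=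
      CStarAlgebra.norm_le_norm_of_nonneg_of_le hp (le_conjugate_pow_add_sum h N)
    _ ≤ ‖star (g ^ N)‖ * ‖p‖ * ‖g ^ N‖ + ‖s‖ :=
      (norm_add_le _ _).trans (by gcongr; exact norm_mul₃_le)
    _ = ‖g ^ N‖ * ‖g ^ N‖ * ‖p‖ + ‖s‖ := by rw [norm_star]; ring
    _ ≤ 1 / 2 * ‖p‖ + ‖s‖ := by gcongr
  linarith

end SpectralRadius

section SchurStability

variable {ι κ : Type*} [Fintype ι] [DecidableEq ι] [Fintype κ]

lemma SchurStableC.spectralRadius_lt_one {G : Matrix ι ι ℂ} (hG : SchurStableC G) :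
    spectralRadius ℂ G < 1 := by
  cases subsingleton_or_nontrivial (Matrix ι ι ℂ)
  · rw [spectrum.SpectralRadius.of_subsingleton]
    exact one_pos
  · exact_mod_cast spectrum.spectralRadius_lt_of_forall_lt G fun μ hμ => by exact_mod_cast hG μ hμ

lemma schurStableC_of_posDef_sub {P G : Matrix ι ι ℂ} (hP : P.PosSemidef)
    (hG : (P - Gᴴ * P * G).PosDef) : SchurStableC G := by
  intro μ hμ
  obtain ⟨v, hv, hGv⟩ := mem_spectrum_iff_exists_mulVec_eq_smul.mp hμ
  have hpos := hG.re_dotProduct_pos hv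
  rw [sub_mulVec, dotProduct_sub, star_dotProduct_conjTranspose_mul_mul_mulVec, hGv, map_sub,
    RCLike.re_to_complex, RCLike.re_to_complex, re_star_smul_dotProduct_mulVec_smul] at hpos
  by_contra! hμ1
  have := le_mul_of_one_le_left (hP.re_dotProduct_nonneg v) (one_le_pow₀ hμ1 (n := 2))
  simp only [RCLike.re_to_complex] at this
  linarith

lemma SchurStableC.norm_lt_one_of_conjTranspose_mulVec {A : Matrix ι ι ℂ} {B : Matrix ι κ ℂ}
    {F : Matrix κ ι ℂ} (hF : SchurStableC (A - B * F)) {w : ι → ℂ} {μ : ℂ} (hw : w ≠ 0)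
    (hA : Aᴴ *ᵥ w = μ • w) (hB : Bᴴ *ᵥ w = 0) : ‖μ‖ < 1 := by
  have hAF : (A - B * F)ᴴ *ᵥ w = μ • w := by
    rw [conjTranspose_sub, conjTranspose_mul, sub_mulVec, ← mulVec_mulVec, hA, hB, mulVec_zero,
      sub_zero]
  simpa using hF _ (star_mem_spectrum_of_conjTranspose_mulVec_eq_smul hw hAF)

end SchurStability

/-- The discrete algebraic Riccati equation for `P` together with its gain `K`, in a form free of
inverses: `K = (1 + Bᴴ P B)⁻¹ Bᴴ P A` is equivalent to `K = Bᴴ P (A - B K)`, and with that gain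
`Aᴴ P A - Aᴴ P B (1 + Bᴴ P B)⁻¹ Bᴴ P A = Aᴴ P (A - B K)`. The matrix `P` is only required to be
positive semidefinite so that the notion passes to the limit `ε → 0`. -/
structure IsRiccatiPair {ι κ : Type*} [Fintype ι] [DecidableEq ι] [Fintype κ]
    (A : Matrix ι ι ℂ) (B : Matrix ι κ ℂ) (ε : ℝ) (P : Matrix ι ι ℂ) (K : Matrix κ ι ℂ) :
    Prop where
  posSemidef : P.PosSemidef
  gain_eq : K = Bᴴ * P * (A - B * K)
  riccati : P = Aᴴ * P * (A - B * K) + ε • 1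

namespace IsRiccatiPair

variable {ι κ : Type*} [Fintype ι] [DecidableEq ι] [Fintype κ] {A P : Matrix ι ι ℂ}
  {B : Matrix ι κ ℂ} {K F : Matrix κ ι ℂ} {ε : ℝ}

lemma conjTranspose_gain_eq (h : IsRiccatiPair A B ε P K) : Kᴴ = (A - B * K)ᴴ * P * B := by
  conv_lhs => rw [h.gain_eq]
  simp only [conjTranspose_mul, conjTranspose_conjTranspose, h.posSemidef.isHermitian.eq,
    Matrix.mul_assoc]

lemma eq_conjugate_closedLoop_add (h : IsRiccatiPair A B ε P K) :
    P = (A - B * K)ᴴ * P * (A - B * K) + Kᴴ * K + ε • 1 := by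
  have hKK : Kᴴ * K = Kᴴ * Bᴴ * P * (A - B * K) := by
    rw [Matrix.mul_assoc, Matrix.mul_assoc, ← Matrix.mul_assoc Bᴴ, ← h.gain_eq]
  conv_lhs => rw [h.riccati]
  rw [hKK, ← Matrix.add_mul, ← Matrix.add_mul, conjTranspose_sub, conjTranspose_mul,
    sub_add_cancel]

lemma completing_square [DecidableEq κ] (h : IsRiccatiPair A B ε P K) (F : Matrix κ ι ℂ) :
    (A - B * F)ᴴ * P * (A - B * F) + Fᴴ * F + ε • 1 =
      P + (F - K)ᴴ * (1 + Bᴴ * P * B) * (F - K) := by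
  obtain ⟨D, rfl⟩ : ∃ D, F = K + D := ⟨F - K, (add_sub_cancel K F).symm⟩
  have hcross : (A - B * K)ᴴ * P * (B * D) = Kᴴ * D := by
    rw [h.conjTranspose_gain_eq, Matrix.mul_assoc _ B]
  have hcross' : (B * D)ᴴ * P * (A - B * K) = Dᴴ * K := by
    rw [conjTranspose_mul, Matrix.mul_assoc, Matrix.mul_assoc, ← Matrix.mul_assoc Bᴴ, ← h.gain_eq]
  have hexpand : (A - B * (K + D))ᴴ * P * (A - B * (K + D)) =
      (A - B * K)ᴴ * P * (A - B * K) - Kᴴ * D - Dᴴ * K + (B * D)ᴴ * P * (B * D) := by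
    rw [Matrix.mul_add, ← sub_sub, conjTranspose_sub _ (B * D), Matrix.sub_mul, Matrix.mul_sub,
      Matrix.sub_mul, Matrix.sub_mul, hcross, hcross']
    abel
  calc _ = ((A - B * K)ᴴ * P * (A - B * K) + Kᴴ * K + ε • 1) + Dᴴ * (1 + Bᴴ * P * B) * D := by
        rw [hexpand]
        simp only [conjTranspose_add, conjTranspose_mul, Matrix.mul_add, Matrix.add_mul,
          Matrix.mul_one, Matrix.mul_assoc]
        abel
    _ = _ := by rw [← h.eq_conjugate_closedLoop_add, add_sub_cancel_left]

lemma le_conjugate_add (h : IsRiccatiPair A B ε P K) (F : Matrix κ ι ℂ) :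
    P ≤ (A - B * F)ᴴ * P * (A - B * F) + (Fᴴ * F + ε • 1) := by
  rw [← add_assoc, h.completing_square, Matrix.le_iff, add_sub_cancel_left]
  exact (PosSemidef.one.add (h.posSemidef.conjTranspose_mul_mul_same B)).conjTranspose_mul_mul_same
    (F - K)

lemma exists_norm_le (hF : SchurStableC (A - B * F)) (b : ℝ) :
    ∃ C, ∀ ε ≤ b, ∀ P K, IsRiccatiPair A B ε P K → ‖P‖ ≤ C := by
  obtain ⟨C, hC⟩ := exists_norm_le_of_le_conjugate_add hF.spectralRadius_lt_one (Fᴴ * F + b • 1)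
  refine ⟨C, fun ε hε P K h => hC P h.posSemidef.nonneg ((h.le_conjugate_add F).trans ?_)⟩
  rw [star_eq_conjTranspose]
  gcongr

lemma norm_gain_sq_le (h : IsRiccatiPair A B ε P K) (hε : 0 ≤ ε) :
    ‖K‖ ^ 2 ≤ ‖P‖ := by
  rw [sq, ← l2_opNorm_conjTranspose_mul_self]
  refine CStarAlgebra.norm_le_norm_of_nonneg_of_le (posSemidef_conjTranspose_mul_self K).nonneg ?_
  have hdiff : P - Kᴴ * K = (A - B * K)ᴴ * P * (A - B * K) + ε • 1 := by
    rw [sub_eq_iff_eq_add, add_right_comm, ← h.eq_conjugate_closedLoop_add]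
  rw [Matrix.le_iff, hdiff]
  exact (h.posSemidef.conjTranspose_mul_mul_same _).add (PosSemidef.one.smul hε)

lemma sub_conjugate_sub_smul [DecidableEq κ] (h : IsRiccatiPair A B ε P K) (l : ℂ) :
    P - (A - l • (B * K))ᴴ * P * (A - l • (B * K)) =
      ε • 1 + Kᴴ * ((2 * l.re - 1) • 1 - ‖l - 1‖ ^ 2 • (Bᴴ * P * B)) * K := by
  have hnorm : ‖l‖ ^ 2 = 2 * l.re - 1 + ‖l - 1‖ ^ 2 := by
    simp only [Complex.sq_norm, Complex.normSq_apply, Complex.sub_re, Complex.sub_im,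
      Complex.one_re, Complex.one_im]
    ring
  have hsq := h.completing_square (l • K)
  have hlK : l • K - K = (l - 1) • K := by rw [sub_smul, one_smul]
  rw [hlK, conjTranspose_smul_mul_mul_smul, ← Matrix.mul_one (l • K)ᴴ,
    conjTranspose_smul_mul_mul_smul, hnorm, Matrix.mul_smul] at hsq
  generalize A - l • (B * K) = G at hsq ⊢
  simp only [Matrix.mul_smul, Matrix.smul_mul, Matrix.mul_add, Matrix.add_mul, Matrix.mul_sub,
    Matrix.sub_mul, Matrix.mul_one] at hsq ⊢
  linear_combination (norm := module) -hsq

lemma schurStableC_sub_smul (h : IsRiccatiPair A B ε P K) (hε : 0 < ε) {l : ℂ}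
    (hl : ‖l - 1‖ ^ 2 * ‖Bᴴ * P * B‖ ≤ 2 * l.re - 1) : SchurStableC (A - l • (B * K)) := by
  refine schurStableC_of_posDef_sub h.posSemidef ?_
  rw [h.sub_conjugate_sub_smul]
  refine (PosDef.one.smul hε).add_posSemidef (PosSemidef.conjTranspose_mul_mul_same ?_ K)
  rw [← Matrix.le_iff]
  calc ‖l - 1‖ ^ 2 • (Bᴴ * P * B)
      ≤ ‖l - 1‖ ^ 2 • ‖Bᴴ * P * B‖ • (1 : Matrix κ κ ℂ) := by
        have hS : IsSelfAdjoint (Bᴴ * P * B) :=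
          (h.posSemidef.conjTranspose_mul_mul_same B).isHermitian
        gcongr
        exact hS.le_algebraMap_norm_self.trans_eq (Algebra.algebraMap_eq_smul_one _)
    _ ≤ (2 * l.re - 1) • 1 := by rw [smul_smul]; gcongr

section Homogeneous

lemma star_dotProduct_mulVec_eq (h : IsRiccatiPair A B 0 P K) (v : ι → ℂ) :
    star v ⬝ᵥ P *ᵥ v =
      star ((A - B * K) *ᵥ v) ⬝ᵥ P *ᵥ ((A - B * K) *ᵥ v) + star (K *ᵥ v) ⬝ᵥ K *ᵥ v := by
  conv_lhs => rw [h.eq_conjugate_closedLoop_add]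
  rw [zero_smul, add_zero, add_mulVec, dotProduct_add,
    star_dotProduct_conjTranspose_mul_mul_mulVec, ← mulVec_mulVec, dotProduct_mulVec (star v),
    ← star_mulVec]

lemma ker_mulVecLin_le_comap (h : IsRiccatiPair A B 0 P K) :
    P.mulVecLin.ker ≤ P.mulVecLin.ker.comap (A - B * K).mulVecLin := by
  intro v hv
  simp only [Submodule.mem_comap, LinearMap.mem_ker, mulVecLin_apply] at hv ⊢
  have henergy := h.star_dotProduct_mulVec_eq v
  rw [hv, dotProduct_zero, eq_comm, add_eq_zero_iff_of_nonneg
    (h.posSemidef.dotProduct_mulVec_nonneg _) (dotProduct_star_self_nonneg _)] at henergy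
  exact (h.posSemidef.dotProduct_mulVec_zero_iff _).mp henergy.1

variable {μ : ℂ} {v : ι → ℂ}

lemma re_star_dotProduct_mulVec_eq (h : IsRiccatiPair A B 0 P K)
    (hv : P *ᵥ ((A - B * K) *ᵥ v) = μ • P *ᵥ v) :
    (star v ⬝ᵥ P *ᵥ v).re =
      ‖μ‖ ^ 2 * (star v ⬝ᵥ P *ᵥ v).re + (star (K *ᵥ v) ⬝ᵥ K *ᵥ v).re := by
  rw [← mulVec_smul] at hv
  conv_lhs => rw [h.star_dotProduct_mulVec_eq v,
    star_dotProduct_mulVec_congr h.posSemidef.isHermitian hv]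
  rw [Complex.add_re, re_star_smul_dotProduct_mulVec_smul]

lemma norm_le_one (h : IsRiccatiPair A B 0 P K) (hPv : P *ᵥ v ≠ 0)
    (hv : P *ᵥ ((A - B * K) *ᵥ v) = μ • P *ᵥ v) : ‖μ‖ ≤ 1 := by
  have hpos : 0 < (star v ⬝ᵥ P *ᵥ v).re :=
    (Complex.pos_iff.mp <| (h.posSemidef.dotProduct_mulVec_nonneg v).lt_of_ne'
      (mt (h.posSemidef.dotProduct_mulVec_zero_iff v).mp hPv)).1
  have hKv : 0 ≤ (star (K *ᵥ v) ⬝ᵥ K *ᵥ v).re :=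
    (Complex.nonneg_iff.mp (dotProduct_star_self_nonneg (K *ᵥ v))).1
  have henergy := h.re_star_dotProduct_mulVec_eq hv
  exact (sq_le_one_iff₀ (norm_nonneg μ)).mp (le_of_mul_le_mul_right (by linarith) hpos)

lemma gain_mulVec_eq_zero (h : IsRiccatiPair A B 0 P K) (hμ : ‖μ‖ = 1)
    (hv : P *ᵥ ((A - B * K) *ᵥ v) = μ • P *ᵥ v) : K *ᵥ v = 0 := by
  have henergy := h.re_star_dotProduct_mulVec_eq hv
  rw [hμ, one_pow, one_mul, left_eq_add] at henergy
  rw [← dotProduct_star_self_eq_zero]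
  exact Complex.ext henergy (Complex.nonneg_iff.mp (dotProduct_star_self_nonneg (K *ᵥ v))).2.symm

lemma eq_zero (h : IsRiccatiPair A B 0 P K) (hA : ∀ μ ∈ spectrum ℂ A, ‖μ‖ ≤ 1)
    (hF : SchurStableC (A - B * F)) : P = 0 := by
  by_contra hP
  have hP' : P.mulVecLin ≠ 0 := by rwa [← toLin'_apply', ne_eq, LinearEquiv.map_eq_zero_iff]
  obtain ⟨μ, v, hPv, hμ⟩ := exists_apply_eq_smul_of_ker_le_comap hP' h.ker_mulVecLin_le_comap
  simp only [mulVecLin_apply] at hPv hμ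
  have hAP : P *ᵥ v = μ • Aᴴ *ᵥ (P *ᵥ v) := by
    conv_lhs => rw [h.riccati]
    rw [zero_smul, add_zero, ← mulVec_mulVec, ← mulVec_mulVec, hμ, mulVec_smul]
  have hKB : K *ᵥ v = μ • Bᴴ *ᵥ (P *ᵥ v) := by
    conv_lhs => rw [h.gain_eq]
    rw [← mulVec_mulVec, ← mulVec_mulVec, hμ, mulVec_smul]
  have hμ0 : μ ≠ 0 := by
    rintro rfl
    exact hPv (by rw [hAP, zero_smul])
  have hleft : Aᴴ *ᵥ (P *ᵥ v) = μ⁻¹ • P *ᵥ v := (eq_inv_smul_iff₀ hμ0).mpr hAP.symm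
  have hinv : ‖μ⁻¹‖ ≤ 1 := by
    simpa using hA _ (star_mem_spectrum_of_conjTranspose_mulVec_eq_smul hPv hleft)
  rw [norm_inv, inv_le_one₀ (norm_pos_iff.mpr hμ0)] at hinv
  have hμ1 : ‖μ‖ = 1 := (h.norm_le_one hPv hμ).antisymm hinv
  have hBP : Bᴴ *ᵥ (P *ᵥ v) = 0 := by
    rw [h.gain_mulVec_eq_zero hμ1 hμ, eq_comm, smul_eq_zero] at hKB
    exact hKB.resolve_left hμ0
  simpa [hμ1] using hF.norm_lt_one_of_conjTranspose_mulVec hPv hleft hBP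

end Homogeneous

lemma isClosed_setOf : IsClosed {x : ℝ × Matrix ι ι ℂ × Matrix κ ι ℂ |
    IsRiccatiPair A B x.1 x.2.1 x.2.2} := by
  have hset : {x : ℝ × Matrix ι ι ℂ × Matrix κ ι ℂ | IsRiccatiPair A B x.1 x.2.1 x.2.2} =
      {x | 0 ≤ x.2.1} ∩ {x | x.2.2 = Bᴴ * x.2.1 * (A - B * x.2.2)} ∩
        {x | x.2.1 = Aᴴ * x.2.1 * (A - B * x.2.2) + x.1 • (1 : Matrix ι ι ℂ)} :=
    Set.ext fun _ => ⟨fun h => ⟨⟨h.1.nonneg, h.2⟩, h.3⟩,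
      fun h => ⟨nonneg_iff_posSemidef.mp h.1.1, h.1.2, h.2⟩⟩
  rw [hset]
  exact ((isClosed_le (by fun_prop) (by fun_prop)).inter
    (isClosed_eq (by fun_prop) (by fun_prop))).inter (isClosed_eq (by fun_prop) (by fun_prop))

lemma tendsto_zero {P : ℝ → Matrix ι ι ℂ} {K : ℝ → Matrix κ ι ℂ}
    (h : ∀ ε > 0, IsRiccatiPair A B ε (P ε) (K ε)) (hA : ∀ μ ∈ spectrum ℂ A, ‖μ‖ ≤ 1)
    (hF : SchurStableC (A - B * F)) :
    Tendsto (fun ε => (P ε, K ε)) (𝓝[>] 0) (𝓝 0) := by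
  obtain ⟨C, hC⟩ := exists_norm_le hF 1
  have : ProperSpace (Matrix ι ι ℂ) := FiniteDimensional.proper ℂ _
  have : ProperSpace (Matrix κ ι ℂ) := FiniteDimensional.proper ℂ _
  have hball : ∀ᶠ ε in 𝓝[>] 0, (P ε, K ε) ∈ Metric.closedBall 0 C ×ˢ Metric.closedBall 0 √C := by
    filter_upwards [Ioc_mem_nhdsGT one_pos] with ε hε
    have hPC := hC ε hε.2 _ _ (h ε hε.1)
    exact ⟨mem_closedBall_zero_iff.mpr hPC, mem_closedBall_zero_iff.mpr <|
      Real.le_sqrt_of_sq_le (((h ε hε.1).norm_gain_sq_le hε.1.le).trans hPC)⟩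
  have hcompact := (isCompact_closedBall (0 : Matrix ι ι ℂ) C).prod
    (isCompact_closedBall (0 : Matrix κ ι ℂ) √C)
  refine hcompact.tendsto_nhds_of_unique_mapClusterPt hball fun ⟨P₀, K₀⟩ _ hcluster => ?_
  obtain ⟨U, hU, hlim⟩ := mapClusterPt_iff_ultrafilter.mp hcluster
  have h₀ : IsRiccatiPair A B 0 P₀ K₀ := isClosed_setOf.mem_of_tendsto
    ((tendsto_id.mono_left (hU.trans nhdsWithin_le_nhds)).prodMk_nhds hlim)
    ((eventually_mem_nhdsWithin.filter_mono hU).mono h)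
  have hP₀ := h₀.eq_zero hA hF
  rw [hP₀, h₀.gain_eq, hP₀, Matrix.mul_zero, Matrix.zero_mul, Prod.mk_zero_zero]

section Uniform

variable {X : Type*} [TopologicalSpace X] {ζ l : X → ℂ} {x₀ : X} {P : ℝ → Matrix ι ι ℂ}
  {K : ℝ → Matrix κ ι ℂ}

lemma eventually_schurStableC_sub_smul (h : ∀ ε > 0, IsRiccatiPair A B ε (P ε) (K ε))
    (hP : Tendsto P (𝓝[>] 0) (𝓝 0)) (hl : ContinuousAt l x₀) (hx₀ : 1 / 2 < (l x₀).re) :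
    ∀ᶠ p : ℝ × X in 𝓝[>] 0 ×ˢ 𝓝 x₀, SchurStableC (A - l p.2 • (B * K p.1)) := by
  have hopen : IsOpen {q : Matrix ι ι ℂ × ℂ | ‖q.2 - 1‖ ^ 2 * ‖Bᴴ * q.1 * B‖ < 2 * q.2.re - 1} :=
    isOpen_lt (by fun_prop) (by fun_prop)
  have hlim : Tendsto (fun p : ℝ × X => (P p.1, l p.2)) (𝓝[>] 0 ×ˢ 𝓝 x₀) (𝓝 (0, l x₀)) :=
    hP.prodMap hl.tendsto |>.trans_eq (nhds_prod_eq).symm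
  have hgap := hlim.eventually_mem (hopen.mem_nhds (by simpa using! by linarith))
  filter_upwards [hgap, tendsto_fst.eventually eventually_mem_nhdsWithin] with p hp hε
  exact (h p.1 hε).schurStableC_sub_smul hε hp.le

lemma eventually_forall_det_ne_zero {S : Set X} (hS : IsCompact S) (hζ : Continuous ζ)
    (hl : Continuous l) (hζ1 : ∀ x, 1 ≤ ‖ζ x‖)
    (hres : ∀ x ∈ S, (ζ x • 1 - A).det = 0 → 1 / 2 < (l x).re)
    (h : ∀ ε > 0, IsRiccatiPair A B ε (P ε) (K ε)) (hA : ∀ μ ∈ spectrum ℂ A, ‖μ‖ ≤ 1)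
    (hF : SchurStableC (A - B * F)) :
    ∀ᶠ ε in 𝓝[>] 0, ∀ x ∈ S, (ζ x • 1 - A + l x • (B * K ε)).det ≠ 0 := by
  have hPK := tendsto_zero h hA hF
  suffices hloc : ∀ x₀ ∈ S, ∀ᶠ p : ℝ × X in 𝓝[>] 0 ×ˢ 𝓝 x₀,
      (ζ p.2 • 1 - A + l p.2 • (B * K p.1)).det ≠ 0 from
    eventually_prod_principal_iff.mp <| Filter.Eventually.filter_mono
      (prod_mono le_rfl principal_le_nhdsSet) (hS.mem_prod_nhdsSet_of_forall hloc)
  intro x₀ hx₀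
  by_cases hdet : (ζ x₀ • 1 - A).det = 0
  · filter_upwards [eventually_schurStableC_sub_smul h ((continuous_fst.tendsto _).comp hPK)
      hl.continuousAt (hres x₀ hx₀ hdet)] with p hp hsing
    refine (hp _ (mem_spectrum_iff_det_smul_one_sub_eq_zero.mpr ?_)).not_ge (hζ1 p.2)
    rwa [sub_sub_eq_add_sub, add_sub_right_comm]
  · have hcont : Continuous fun q : Matrix κ ι ℂ × X => (ζ q.2 • 1 - A + l q.2 • (B * q.1)).det :=
      Continuous.matrix_det (by fun_prop)
    have hK : Tendsto (fun p : ℝ × X => (K p.1, p.2)) (𝓝[>] 0 ×ˢ 𝓝 x₀) (𝓝 (0, x₀)) :=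
      (((continuous_snd.tendsto _).comp hPK).comp tendsto_fst).prodMk_nhds tendsto_snd
    exact ((hcont.tendsto (0, x₀)).comp hK).eventually_ne (by simpa using! hdet)

end Uniform

end IsRiccatiPair

section RealSystems

lemma map_ofReal_smul_one {ι : Type*} [DecidableEq ι] (c : ℝ) :
    (c • (1 : Matrix ι ι ℝ)).map Complex.ofReal = c • 1 := by
  ext i j
  simp [Matrix.one_apply, apply_ite Complex.ofReal]

variable {ι κ μ : Type*}

lemma map_ofReal_mul [Fintype κ] (M : Matrix ι κ ℝ) (N : Matrix κ μ ℝ) :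
    (M * N).map Complex.ofReal = M.map Complex.ofReal * N.map Complex.ofReal :=
  Matrix.map_mul (f := Complex.ofRealHom)

lemma conjTranspose_map_ofReal (M : Matrix ι κ ℝ) :
    (M.map Complex.ofReal)ᴴ = Mᵀ.map Complex.ofReal := by
  ext i j
  simp

lemma posSemidef_map_ofReal [Finite ι] {M : Matrix ι ι ℝ} (hM : M.PosSemidef) :
    (M.map Complex.ofReal).PosSemidef := by
  cases nonempty_fintype ι
  obtain ⟨L, rfl⟩ := CStarAlgebra.nonneg_iff_eq_star_mul_self.mp hM.nonneg
  rw [star_eq_conjTranspose, conjTranspose_eq_transpose_of_trivial, map_ofReal_mul,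
    ← conjTranspose_map_ofReal]
  exact posSemidef_conjTranspose_mul_self _

lemma det_conj_smul_one_sub_map_ofReal [Fintype ι] [DecidableEq ι] (M : Matrix ι ι ℝ) (z : ℂ) :
    (conj z • 1 - M.map Complex.ofReal).det = conj (z • 1 - M.map Complex.ofReal).det := by
  rw [RingHom.map_det]
  congr 1
  ext i j
  simp [Matrix.one_apply, apply_ite]

variable {n m : ℕ} {A P : Matrix (Fin n) (Fin n) ℝ} {B : Matrix (Fin n) (Fin m) ℝ} {ε ω : ℝ}

lemma gainK_eq_mul_sub (hP : P.PosSemidef) :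
    gainK A B P = Bᵀ * P * (A - B * gainK A B P) := by
  have hR : (1 + Bᵀ * P * B).PosDef :=
    PosDef.one.add_posSemidef (by simpa using hP.conjTranspose_mul_mul_same B)
  have hsolve : (1 + Bᵀ * P * B) * gainK A B P = Bᵀ * P * A :=
    mul_nonsing_inv_cancel_left _ _ hR.det_pos.ne'.isUnit
  rw [Matrix.mul_sub, ← hsolve, Matrix.add_mul, Matrix.one_mul, ← Matrix.mul_assoc,
    add_sub_cancel_right]

lemma IsDARESol.eq_mul_sub (h : IsDARESol A B ε P) :
    P = Aᵀ * P * (A - B * gainK A B P) + ε • 1 := by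
  rw [Matrix.mul_sub, gainK, ← Matrix.mul_assoc, ← Matrix.mul_assoc,
    ← sub_eq_zero, ← neg_eq_zero, ← h.2]
  abel

lemma IsDARESol.isRiccatiPair (h : IsDARESol A B ε P) :
    IsRiccatiPair (A.map Complex.ofReal) (B.map Complex.ofReal) ε (P.map Complex.ofReal)
      ((gainK A B P).map Complex.ofReal) where
  posSemidef := posSemidef_map_ofReal h.1.posSemidef
  gain_eq := by
    conv_lhs => rw [gainK_eq_mul_sub h.1.posSemidef]
    rw [map_ofReal_mul, map_ofReal_mul, Matrix.map_sub _ Complex.ofReal_sub, map_ofReal_mul,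
      conjTranspose_map_ofReal]
  riccati := by
    conv_lhs => rw [h.eq_mul_sub]
    rw [Matrix.map_add _ Complex.ofReal_add, map_ofReal_mul, map_ofReal_mul,
      Matrix.map_sub _ Complex.ofReal_sub, map_ofReal_mul, map_ofReal_smul_one,
      conjTranspose_map_ofReal]

lemma Stabilizable.exists_schurStableC (h : Stabilizable A B) :
    ∃ F : Matrix (Fin m) (Fin n) ℂ,
      SchurStableC (A.map Complex.ofReal - B.map Complex.ofReal * F) := by
  obtain ⟨F, hF⟩ := h
  refine ⟨F.map Complex.ofReal, ?_⟩
  rwa [← map_ofReal_mul, ← Matrix.map_sub _ Complex.ofReal_sub]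

lemma abs_le_omegaMax (hω : ω ∈ Set.Icc (-Real.pi) Real.pi)
    (hdet : (Complex.exp (ω * Complex.I) • 1 - A.map Complex.ofReal).det = 0) :
    |ω| ≤ omegaMax A := by
  have hunstable : ¬ SchurStable A := fun hs => by
    have := hs _ (mem_spectrum_iff_det_smul_one_sub_eq_zero.mpr hdet)
    rw [Complex.norm_exp_ofReal_mul_I] at this
    exact this.false
  rw [omegaMax, if_neg hunstable]
  refine le_csSup ⟨Real.pi, fun _ h => h.1.2⟩ ⟨⟨abs_nonneg _, abs_le.mpr hω⟩, ?_⟩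
  obtain h | h := abs_choice ω <;> rw [h]
  · exact hdet
  · have hexp : Complex.exp ((-ω : ℝ) * Complex.I) = conj (Complex.exp (ω * Complex.I)) := by
      rw [← Complex.exp_conj]
      simp
    rw [hexp, det_conj_smul_one_sub_map_ofReal, hdet, map_zero]

end RealSystems

lemma cos_le_cos_of_abs_le {x y : ℝ} (hxy : |x| ≤ y) (hy : y ≤ Real.pi) :
    Real.cos y ≤ Real.cos x := by
  rw [← Real.cos_abs x]
  exact Real.cos_le_cos_of_nonneg_of_le_pi (abs_nonneg x) hy hxy

lemma re_ofReal_mul_exp_neg_mul_I (ρ x : ℝ) :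
    ((ρ : ℂ) * Complex.exp (-x * Complex.I)).re = ρ * Real.cos x := by
  rw [Complex.re_ofReal_mul, ← Complex.ofReal_neg, Complex.exp_ofReal_mul_I_re, Real.cos_neg]

/-- nonsingularity of `e^{iω}I − A + ρ e^{−iωκ} B K_ε` for all
`ω ∈ [−π, π]` and integer delays `κ ∈ {0,…,κ̄}`, for all sufficiently small `ε > 0`,
provided `κ̄·ω_max < π/2` and `ρ cos(κ̄·ω_max) > 1/2`. -/
theorem delay_det_condition {n m : ℕ}
    (A : Matrix (Fin n) (Fin n) ℝ) (B : Matrix (Fin n) (Fin m) ℝ)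
    (hstab : Stabilizable A B) (hA : EigInClosedUnitDisc A)
    (κbar : ℕ) (hκbar : (κbar : ℝ) * omegaMax A < Real.pi / 2)
    (ρ : ℝ) (hρpos : 0 < ρ) (hρ : 1 / 2 < ρ * Real.cos ((κbar : ℝ) * omegaMax A))
    (P : ℝ → Matrix (Fin n) (Fin n) ℝ)
    (hP : ∀ ε > (0 : ℝ), IsDARESol A B ε (P ε)) :
    ∃ εstar > (0 : ℝ), ∀ ε ∈ Set.Ioc (0 : ℝ) εstar,
      ∀ ω ∈ Set.Icc (-Real.pi) Real.pi, ∀ κ : ℕ, κ ≤ κbar →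
        (Complex.exp (ω * Complex.I) • (1 : Matrix (Fin n) (Fin n) ℂ)
          - A.map Complex.ofReal
          + ((ρ : ℂ) * Complex.exp (-(ω * (κ : ℝ)) * Complex.I)) •
              (B * gainK A B (P ε)).map Complex.ofReal).det ≠ 0 := by
  obtain ⟨F, hF⟩ := hstab.exists_schurStableC
  have hloop : ∀ᶠ ε in 𝓝[>] 0, ∀ x ∈ Set.Icc (-Real.pi) Real.pi ×ˢ Set.Iic κbar,
      (Complex.exp (x.1 * Complex.I) • (1 : Matrix (Fin n) (Fin n) ℂ) - A.map Complex.ofReal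
        + ((ρ : ℂ) * Complex.exp (-(x.1 * (x.2 : ℝ)) * Complex.I)) •
          (B.map Complex.ofReal * (gainK A B (P ε)).map Complex.ofReal)).det ≠ 0 := by
    refine IsRiccatiPair.eventually_forall_det_ne_zero
      (isCompact_Icc.prod (Set.finite_Iic κbar).isCompact) (by fun_prop) (by fun_prop)
      (fun x => (Complex.norm_exp_ofReal_mul_I _).ge) (fun x hx hdet => ?_)
      (fun ε hε => (hP ε hε).isRiccatiPair) hA hF
    have hphase : |x.1 * x.2| ≤ κbar * omegaMax A := by
      rw [abs_mul, mul_comm, Nat.abs_cast]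
      gcongr
      exacts [hx.2, abs_le_omegaMax hx.1 hdet]
    have hcos := cos_le_cos_of_abs_le hphase (by linarith [Real.pi_pos])
    rw [← Complex.ofReal_mul, re_ofReal_mul_exp_neg_mul_I]
    exact hρ.trans_le (by gcongr)
  obtain ⟨εstar, hεstar, hsub⟩ := mem_nhdsGT_iff_exists_Ioc_subset.mp hloop
  refine ⟨εstar, hεstar, fun ε hε ω hω κ hκ => ?_⟩
  rw [map_ofReal_mul]
  exact hsub hε (ω, κ) ⟨hω, hκ⟩

end
end
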